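/- arXiv:1411.4732 — 3 statements merged into one kernel-verified Lean document; each statement's English description precedes it below -/
import Mathlib

section
/- Consider the And example: (X₁, X₂) is uniformly distributed on Fin 2 × Fin 2 and Y = X₁ AND X₂ (Y = 1 iff X₁ = 1 and X₂ = 1). For any random variable Q on a finite type jointly distributed with (X₁, X₂, Y) consistently with this distribution, if H(Q|X₁) = 0 and H(Q|X₂) = 0, then I(Q:Y) = 0. (Hence I_∧(X₁, X₂ : Y) = 0 for the And example.) -/
open Real Finset

/- STATEMENT 11: The And example.  `(X₁, X₂)` is uniform on `Fin 2 × Fin 2` and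
`Y = X₁ AND X₂` (i.e. `y = x₁ * x₂` in `Fin 2`).  For any `Q` jointly distributed
with `(X₁, X₂, Y)` consistently with this distribution, if `H(Q|X₁) = 0` and
`H(Q|X₂) = 0` then `I(Q:Y) = 0`.  Hence `I_∧(X₁, X₂ : Y) = 0` for And. -/

section Defs

variable {Q A B C : Type*} [Fintype Q] [Fintype A] [Fintype B] [Fintype C]

/-- Marginal of `Q`. -/
noncomputable def margQ (p : Q × A × B × C → ℝ) (q : Q) : ℝ :=
  ∑ a, ∑ b, ∑ c, p (q, a, b, c)

/-- Marginal of `X₁`. -/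
noncomputable def margX1 (p : Q × A × B × C → ℝ) (a : A) : ℝ :=
  ∑ q, ∑ b, ∑ c, p (q, a, b, c)

/-- Marginal of `X₂`. -/
noncomputable def margX2 (p : Q × A × B × C → ℝ) (b : B) : ℝ :=
  ∑ q, ∑ a, ∑ c, p (q, a, b, c)

/-- Marginal of `Y`. -/
noncomputable def margY (p : Q × A × B × C → ℝ) (c : C) : ℝ :=
  ∑ q, ∑ a, ∑ b, p (q, a, b, c)

/-- Marginal of `(Q, X₁)`. -/
noncomputable def margQX1 (p : Q × A × B × C → ℝ) (q : Q) (a : A) : ℝ :=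
  ∑ b, ∑ c, p (q, a, b, c)

/-- Marginal of `(Q, X₂)`. -/
noncomputable def margQX2 (p : Q × A × B × C → ℝ) (q : Q) (b : B) : ℝ :=
  ∑ a, ∑ c, p (q, a, b, c)

/-- Marginal of `(Q, Y)`. -/
noncomputable def margQY (p : Q × A × B × C → ℝ) (q : Q) (c : C) : ℝ :=
  ∑ a, ∑ b, p (q, a, b, c)

/-- Conditional entropy `H(Q|X₁)`. -/
noncomputable def condEntQX1 (p : Q × A × B × C → ℝ) : ℝ :=
  -∑ q, ∑ a, margQX1 p q a * logb 2 (margQX1 p q a / margX1 p a)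

/-- Conditional entropy `H(Q|X₂)`. -/
noncomputable def condEntQX2 (p : Q × A × B × C → ℝ) : ℝ :=
  -∑ q, ∑ b, margQX2 p q b * logb 2 (margQX2 p q b / margX2 p b)

/-- Mutual information `I(Q:Y)`. -/
noncomputable def miQY (p : Q × A × B × C → ℝ) : ℝ :=
  ∑ q, ∑ c, margQY p q c * logb 2 (margQY p q c / (margQ p q * margY p c))

end Defs

theorem and_aux_term {m : ℝ} (h0 : 0 ≤ m) (h1 : m ≤ 1 / 2) :
    m * logb 2 (m / (1 / 2)) ≤ 0 := by
  apply mul_nonpos_of_nonneg_of_nonpos h0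
  apply Real.logb_nonpos (by norm_num) (by positivity)
  linarith

theorem and_aux_term_zero {m : ℝ} (h0 : 0 ≤ m)
    (h : m * logb 2 (m / (1 / 2)) = 0) : m = 0 ∨ m = 1 / 2 := by
  rcases mul_eq_zero.1 h with h | h
  · exact Or.inl h
  · rw [Real.logb_eq_zero] at h
    rcases h with h | h | h | h | h | h
    · norm_num at h
    · norm_num at h
    · norm_num at h
    · left; linarith
    · right; linarith
    · linarith

theorem and_aux_sum {Q : Type*} [Fintype Q] (m : Q → Fin 2 → ℝ)
    (h0 : ∀ q a, 0 ≤ m q a) (h1 : ∀ q a, m q a ≤ 1 / 2)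
    (h : -∑ q, ∑ a, m q a * logb 2 (m q a / (1 / 2)) = 0) (q : Q) (a : Fin 2) :
    m q a = 0 ∨ m q a = 1 / 2 := by
  apply and_aux_term_zero (h0 q a)
  have h' := neg_eq_zero.1 h
  rw [Finset.sum_eq_zero_iff_of_nonpos
    (fun q _ => Finset.sum_nonpos fun a _ => and_aux_term (h0 q a) (h1 q a))] at h'
  have h2 := h' q (Finset.mem_univ q)
  rw [Finset.sum_eq_zero_iff_of_nonpos (fun a _ => and_aux_term (h0 q a) (h1 q a))] at h2
  exact h2 a (Finset.mem_univ a)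

theorem stmt_11 {Q : Type*} [Fintype Q]
    (p : Q × Fin 2 × Fin 2 × Fin 2 → ℝ)
    (hnn : ∀ a, 0 ≤ p a)
    (hmarg : ∀ x₁ x₂ y : Fin 2,
      (∑ q, p (q, x₁, x₂, y)) = if y = x₁ * x₂ then (1 : ℝ) / 4 else 0)
    (h1 : condEntQX1 p = 0)
    (h2 : condEntQX2 p = 0) :
    miQY p = 0 := by
  have hle : ∀ q x y z, p (q, x, y, z) ≤ if z = x * y then (1 : ℝ) / 4 else 0 := by
    intro q x y z
    rw [← hmarg x y z]
    exact Finset.single_le_sum (f := fun q => p (q, x, y, z)) (fun q _ => hnn _)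
      (Finset.mem_univ q)
  have m000 := hmarg 0 0 0
  have m001 := hmarg 0 0 1
  have m010 := hmarg 0 1 0
  have m011 := hmarg 0 1 1
  have m100 := hmarg 1 0 0
  have m101 := hmarg 1 0 1
  have m110 := hmarg 1 1 0
  have m111 := hmarg 1 1 1
  norm_num at m000 m001 m010 m011 m100 m101 m110 m111
  have hX1 : ∀ a, margX1 p a = 1 / 2 := by
    intro a
    fin_cases a <;>
      simp only [margX1, Fin.sum_univ_two, Finset.sum_add_distrib, Fin.zero_eta, Fin.mk_one] <;>
      linarith
  have hX2 : ∀ a, margX2 p a = 1 / 2 := by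
    intro a
    fin_cases a <;>
      simp only [margX2, Fin.sum_univ_two, Finset.sum_add_distrib, Fin.zero_eta, Fin.mk_one] <;>
      linarith
  have hY0 : margY p 0 = 3 / 4 := by
    simp only [margY, Fin.sum_univ_two, Finset.sum_add_distrib]; linarith
  have hY1 : margY p 1 = 1 / 4 := by
    simp only [margY, Fin.sum_univ_two, Finset.sum_add_distrib]; linarith
  have n1 : ∀ q a, 0 ≤ margQX1 p q a := fun q a =>
    Finset.sum_nonneg fun _ _ => Finset.sum_nonneg fun _ _ => hnn _
  have n2 : ∀ q a, 0 ≤ margQX2 p q a := fun q a =>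
    Finset.sum_nonneg fun _ _ => Finset.sum_nonneg fun _ _ => hnn _
  have l1 : ∀ q a, margQX1 p q a ≤ 1 / 2 := fun q a => by
    rw [← hX1 a]
    exact Finset.single_le_sum (f := fun q => margQX1 p q a) (fun q _ => n1 q a)
      (Finset.mem_univ q)
  have l2 : ∀ q a, margQX2 p q a ≤ 1 / 2 := fun q a => by
    rw [← hX2 a]
    exact Finset.single_le_sum (f := fun q => margQX2 p q a) (fun q _ => n2 q a)
      (Finset.mem_univ q)
  simp only [condEntQX1, hX1] at h1
  simp only [condEntQX2, hX2] at h2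
  have k1 := and_aux_sum _ n1 l1 h1
  have k2 := and_aux_sum _ n2 l2 h2
  unfold miQY
  apply Finset.sum_eq_zero
  intro q _
  have b000 := hle q 0 0 0
  have b001 := hle q 0 0 1
  have b010 := hle q 0 1 0
  have b011 := hle q 0 1 1
  have b100 := hle q 1 0 0
  have b101 := hle q 1 0 1
  have b110 := hle q 1 1 0
  have b111 := hle q 1 1 1
  norm_num at b000 b001 b010 b011 b100 b101 b110 b111
  have c000 := hnn (q, 0, 0, 0)
  have c001 := hnn (q, 0, 0, 1)
  have c010 := hnn (q, 0, 1, 0)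
  have c011 := hnn (q, 0, 1, 1)
  have c100 := hnn (q, 1, 0, 0)
  have c101 := hnn (q, 1, 0, 1)
  have c110 := hnn (q, 1, 1, 0)
  have c111 := hnn (q, 1, 1, 1)
  have e1 := k1 q 0
  have e2 := k1 q 1
  have e3 := k2 q 0
  have e4 := k2 q 1
  simp only [margQX1, margQX2, Fin.sum_univ_two] at e1 e2 e3 e4
  have key : (margQY p q 0 = 0 ∧ margQY p q 1 = 0) ∨
      (margQY p q 0 = 3 / 4 ∧ margQY p q 1 = 1 / 4 ∧ margQ p q = 1) := by
    simp only [margQY, margQ, Fin.sum_univ_two]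
    rcases e1 with e1 | e1
    · left
      have : p (q, 1, 0, 0) = 0 := by rcases e3 with e3 | e3 <;> linarith
      have : p (q, 1, 1, 1) = 0 := by rcases e2 with e2 | e2 <;> linarith
      constructor <;> linarith
    · right
      have : p (q, 1, 0, 0) = 1 / 4 := by rcases e3 with e3 | e3 <;> linarith
      have : p (q, 1, 1, 1) = 1 / 4 := by rcases e2 with e2 | e2 <;> linarith
      refine ⟨?_, ?_, ?_⟩ <;> linarith
  rw [Fin.sum_univ_two, hY0, hY1]
  rcases key with ⟨ha, hb⟩ | ⟨ha, hb, hc⟩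
  · simp [ha, hb]
  · rw [ha, hb, hc]; norm_num
end

section
/- Consider the ImperfectRdn example: the joint distribution of (X₁, X₂, Y) on Fin 2 × Fin 2 × Fin 2 assigns probability 0.499 to (0,0,0), 0.001 to (0,1,0), 0.5 to (1,1,1), and 0 elsewhere. For any random variable Q on a finite type jointly distributed with (X₁, X₂, Y) consistently with this distribution, if H(Q|X₁) = 0 and H(Q|X₂) = 0, then I(Q:Y) = 0. (Hence I_∧(X₁, X₂ : Y) = 0 for ImperfectRdn: I_∧ is blind to the noisy correlation between X₁ and X₂.) -/
open Real Finset

theorem aux_term_nonpos {f m : ℝ} (hf : 0 ≤ f) (hfm : f ≤ m) (hm : 0 < m) :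
    f * logb 2 (f / m) ≤ 0 := by
  apply mul_nonpos_of_nonneg_of_nonpos hf
  apply Real.logb_nonpos (by norm_num) (by positivity)
  rw [div_le_one hm]; exact hfm

theorem aux_term_zero {f m : ℝ} (hf : 0 ≤ f) (hm : 0 < m)
    (h : f * logb 2 (f / m) = 0) : f = 0 ∨ f = m := by
  rcases mul_eq_zero.1 h with h | h
  · exact Or.inl h
  · rw [Real.logb_eq_zero] at h
    have h0 : 0 ≤ f / m := by positivity
    rcases h with h | h | h | h | h | h
    · norm_num at h
    · norm_num at h
    · norm_num at h
    · left; rcases div_eq_zero_iff.1 h with h | h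
      · exact h
      · exact absurd h hm.ne'
    · right; exact (div_eq_one_iff_eq hm.ne').1 h
    · linarith

theorem aux_sum {Q : Type*} [Fintype Q] (f : Q → Fin 2 → ℝ) (m : Fin 2 → ℝ)
    (hf : ∀ q a, 0 ≤ f q a) (hs : ∀ a, ∑ q, f q a = m a) (hm : ∀ a, 0 < m a)
    (h : -∑ q, ∑ a, f q a * logb 2 (f q a / m a) = 0) (q : Q) (a : Fin 2) :
    f q a = 0 ∨ f q a = m a := by
  have hle : ∀ q a, f q a ≤ m a := fun q a => by
    rw [← hs a]
    exact Finset.single_le_sum (f := fun q => f q a) (fun i _ => hf i a) (Finset.mem_univ q)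
  have hn : ∀ q a, f q a * logb 2 (f q a / m a) ≤ 0 := fun q a =>
    aux_term_nonpos (hf q a) (hle q a) (hm a)
  have h' := neg_eq_zero.1 h
  rw [Finset.sum_eq_zero_iff_of_nonpos
    (fun q _ => Finset.sum_nonpos (fun a _ => hn q a))] at h'
  have h2 := h' q (Finset.mem_univ q)
  rw [Finset.sum_eq_zero_iff_of_nonpos (fun a _ => hn q a)] at h2
  exact aux_term_zero (hf q a) (hm a) (h2 a (Finset.mem_univ a))

theorem stmt_12 {Q : Type*} [Fintype Q]
    (p : Q × Fin 2 × Fin 2 × Fin 2 → ℝ)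
    (hnn : ∀ a, 0 ≤ p a)
    (hmarg : ∀ x₁ x₂ y : Fin 2,
      (∑ q, p (q, x₁, x₂, y)) =
        if x₁ = 0 ∧ x₂ = 0 ∧ y = 0 then (0.499 : ℝ)
        else if x₁ = 0 ∧ x₂ = 1 ∧ y = 0 then (0.001 : ℝ)
        else if x₁ = 1 ∧ x₂ = 1 ∧ y = 1 then (0.5 : ℝ)
        else 0)
    (h1 : condEntQX1 p = 0)
    (h2 : condEntQX2 p = 0) :
    miQY p = 0 := by
  have s000 := hmarg 0 0 0
  have s001 := hmarg 0 0 1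
  have s010 := hmarg 0 1 0
  have s011 := hmarg 0 1 1
  have s100 := hmarg 1 0 0
  have s101 := hmarg 1 0 1
  have s110 := hmarg 1 1 0
  have s111 := hmarg 1 1 1
  norm_num at s000 s001 s010 s011 s100 s101 s110 s111
  have z : ∀ x y w : Fin 2, ∑ q, p (q, x, y, w) = 0 → ∀ q, p (q, x, y, w) = 0 := by
    intro x y w h q
    exact (Finset.sum_eq_zero_iff_of_nonneg (fun q _ => hnn _)).1 h q (Finset.mem_univ q)
  have z001 := z _ _ _ s001
  have z011 := z _ _ _ s011
  have z100 := z _ _ _ s100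
  have z101 := z _ _ _ s101
  have z110 := z _ _ _ s110
  have mx10 : margX1 p 0 = 1 / 2 := by
    simp [margX1, Fin.sum_univ_two, z001, z011, Finset.sum_add_distrib, s000, s010]; norm_num
  have mx11 : margX1 p 1 = 1 / 2 := by
    simp [margX1, Fin.sum_univ_two, z100, z101, z110, s111]
  have mx20 : margX2 p 0 = 499 / 1000 := by
    simp [margX2, Fin.sum_univ_two, z001, z100, z101, s000]
  have mx21 : margX2 p 1 = 501 / 1000 := by
    simp [margX2, Fin.sum_univ_two, z011, z110, Finset.sum_add_distrib, s010, s111]; norm_num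
  have my0 : margY p 0 = 1 / 2 := by
    simp [margY, Fin.sum_univ_two, z100, z110, Finset.sum_add_distrib, s000, s010]; norm_num
  have my1 : margY p 1 = 1 / 2 := by
    simp [margY, Fin.sum_univ_two, z001, z011, z101, s111]
  have k1 := aux_sum (margQX1 p) (margX1 p)
    (fun q a => Finset.sum_nonneg fun _ _ => Finset.sum_nonneg fun _ _ => hnn _)
    (fun a => rfl)
    (by intro a; fin_cases a
        · simp [mx10]
        · simp [mx11]) h1
  have k2 := aux_sum (margQX2 p) (margX2 p)
    (fun q a => Finset.sum_nonneg fun _ _ => Finset.sum_nonneg fun _ _ => hnn _)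
    (fun a => rfl)
    (by intro a; fin_cases a
        · simp [mx20]
        · simp [mx21]) h2
  unfold miQY
  apply Finset.sum_eq_zero
  intro q _
  have a0 := k1 q 0
  have a1 := k1 q 1
  have b0 := k2 q 0
  have b1 := k2 q 1
  rw [mx10] at a0
  rw [mx11] at a1
  rw [mx20] at b0
  rw [mx21] at b1
  simp only [margQX1, margQX2, Fin.sum_univ_two, z001, z011, z100, z101, z110, add_zero,
    zero_add] at a0 a1 b0 b1
  have key : (p (q, 0, 0, 0) = 0 ∧ p (q, 0, 1, 0) = 0 ∧ p (q, 1, 1, 1) = 0) ∨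
      (p (q, 0, 0, 0) = 499 / 1000 ∧ p (q, 0, 1, 0) = 1 / 1000 ∧ p (q, 1, 1, 1) = 1 / 2) := by
    have n1 := hnn (q, 0, 0, 0)
    have n2 := hnn (q, 0, 1, 0)
    have n3 := hnn (q, 1, 1, 1)
    rcases a0 with a0 | a0 <;> rcases a1 with a1 | a1 <;> rcases b0 with b0 | b0 <;>
      rcases b1 with b1 | b1 <;>
      first
      | (exfalso; linarith)
      | (left; refine ⟨?_, ?_, ?_⟩ <;> linarith)
      | (right; refine ⟨?_, ?_, ?_⟩ <;> linarith)
  rw [Fin.sum_univ_two, my0, my1]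
  simp only [margQY, margQ, Fin.sum_univ_two, z001, z011, z100, z101, z110, add_zero, zero_add]
  rcases key with ⟨e1, e2, e3⟩ | ⟨e1, e2, e3⟩
  · simp [e1, e2, e3]
  · rw [e1, e2, e3]; norm_num
end

section
/- Consider the RdnXor example: (X₁, X₂, Y) take values in (Fin 2 × Fin 2)³, where the joint distribution assigns probability 1/8 to each triple of the form ((r, a), (r, b), (r, a XOR b)) for r, a, b ∈ Fin 2, and 0 elsewhere. Then: (a) the random variable Q given by the first component of X₁ satisfies H(Q|X₁) = 0, H(Q|X₂) = 0, and I(Q:Y) = 1; and (b) for any random variable Q' on a finite type jointly distributed with (X₁, X₂, Y) consistently with this distribution, if H(Q'|X₁) = 0 and H(Q'|X₂) = 0, then I(Q':Y) ≤ 1. (Hence I_∧(X₁, X₂ : Y) = 1 bit for RdnXor.) -/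
open Real Finset

/-- The RdnXor distribution of `(X₁, X₂, Y)`: probability `1/8` on each triple
`((r,a),(r,b),(r, a XOR b))` with `r, a, b ∈ Fin 2` (XOR is addition in `Fin 2`). -/
noncomputable def rdnXor : (Fin 2 × Fin 2) × (Fin 2 × Fin 2) × (Fin 2 × Fin 2) → ℝ :=
  fun a =>
    if a.2.1.1 = a.1.1 ∧ a.2.2.1 = a.1.1 ∧ a.2.2.2 = a.1.2 + a.2.1.2 then (1 : ℝ) / 8 else 0

/-- The joint pmf of `(Q, X₁, X₂, Y)` where `Q` is the first component of `X₁`. -/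
noncomputable def rdnXorQ :
    Fin 2 × (Fin 2 × Fin 2) × (Fin 2 × Fin 2) × (Fin 2 × Fin 2) → ℝ :=
  fun a => if a.1 = a.2.1.1 then rdnXor a.2 else 0

theorem ent_term_nonpos {m M : ℝ} (h0 : 0 ≤ m) (h1 : m ≤ M) (hM : 0 < M) :
    m * logb 2 (m / M) ≤ 0 := by
  apply mul_nonpos_of_nonneg_of_nonpos h0
  apply Real.logb_nonpos (by norm_num) (by positivity)
  rw [div_le_one hM]; exact h1

theorem ent_term_zero {m M : ℝ} (h0 : 0 ≤ m) (hM : 0 < M)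
    (h : m * logb 2 (m / M) = 0) : m = 0 ∨ m = M := by
  rcases mul_eq_zero.1 h with h | h
  · exact Or.inl h
  · rcases Real.logb_eq_zero.1 h with h | h | h | h | h | h
    · norm_num at h
    · norm_num at h
    · norm_num at h
    · rcases div_eq_zero_iff.1 h with h | h
      · exact Or.inl h
      · exact absurd h hM.ne'
    · right; field_simp at h; exact h
    · have : 0 ≤ m / M := by positivity
      linarith

/-- If a conditional entropy with uniform conditioning marginal vanishes, the joint is `0` or full. -/
theorem ent_zero {Q A : Type*} [Fintype Q] [Fintype A] (f : Q → A → ℝ) (M : A → ℝ)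
    (h0 : ∀ q a, 0 ≤ f q a) (hM : ∀ a, 0 < M a) (hs : ∀ a, ∑ q, f q a = M a)
    (h : -∑ q, ∑ a, f q a * logb 2 (f q a / M a) = 0) (q : Q) (a : A) :
    f q a = 0 ∨ f q a = M a := by
  have hle : ∀ q a, f q a ≤ M a := fun q a => by
    rw [← hs a]
    exact Finset.single_le_sum (f := fun q => f q a) (fun i _ => h0 i a) (Finset.mem_univ q)
  have hn : ∀ q a, f q a * logb 2 (f q a / M a) ≤ 0 :=
    fun q a => ent_term_nonpos (h0 q a) (hle q a) (hM a)
  have h1 := (Finset.sum_eq_zero_iff_of_nonpos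
    (fun q _ => Finset.sum_nonpos (fun a _ => hn q a))).1 (neg_eq_zero.1 h) q (Finset.mem_univ q)
  have h2 := (Finset.sum_eq_zero_iff_of_nonpos (fun a _ => hn q a)).1 h1 a (Finset.mem_univ a)
  exact ent_term_zero (h0 q a) (hM a) h2

theorem xor_arith {x y z w : ℝ} (x0 : 0 ≤ x) (y0 : 0 ≤ y) (z0 : 0 ≤ z) (w0 : 0 ≤ w)
    (x1 : x ≤ 8⁻¹) (y1 : y ≤ 8⁻¹) (z1 : z ≤ 8⁻¹) (w1 : w ≤ 8⁻¹)
    (a0 : x + y = 0 ∨ x + y = 4⁻¹) (a1 : z + w = 0 ∨ z + w = 4⁻¹)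
    (b0 : x + z = 0 ∨ x + z = 4⁻¹) (b1 : y + w = 0 ∨ y + w = 4⁻¹) : x + w = y + z := by
  have h1 : x = y := by rcases a0 with h | h <;> linarith
  have h2 : z = w := by rcases a1 with h | h <;> linarith
  have h3 : x = z := by rcases b0 with h | h <;> linarith
  linarith

theorem rdnXor_partB (Q' : Type) [Fintype Q']
    (p : Q' × (Fin 2 × Fin 2) × (Fin 2 × Fin 2) × (Fin 2 × Fin 2) → ℝ)
    (hp : ∀ a, 0 ≤ p a)
    (hm : ∀ x₁ x₂ y, (∑ q, p (q, x₁, x₂, y)) = rdnXor (x₁, x₂, y))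
    (hX1 : condEntQX1 p = 0) (hX2 : condEntQX2 p = 0) : miQY p ≤ 1 := by
  have hle : ∀ q x₁ x₂ y, p (q, x₁, x₂, y) ≤ rdnXor (x₁, x₂, y) := fun q x₁ x₂ y => by
    rw [← hm]
    exact Finset.single_le_sum (f := fun q => p (q, x₁, x₂, y)) (fun i _ => hp _)
      (Finset.mem_univ q)
  have hz : ∀ q r a s b t c, ¬ (s = r ∧ t = r ∧ c = a + b) →
      p (q, (r, a), (s, b), (t, c)) = 0 := fun q r a s b t c h => by
    have := hle q (r, a) (s, b) (t, c)
    simp only [rdnXor, if_neg h] at this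
    exact le_antisymm this (hp _)
  have h8 : ∀ q r a s b t c, p (q, (r, a), (s, b), (t, c)) ≤ 1 / 8 := fun q r a s b t c => by
    refine (hle q (r, a) (s, b) (t, c)).trans ?_
    simp only [rdnXor]
    split_ifs <;> norm_num
  have mX1 : ∀ x, margX1 p x = 1 / 4 := fun x => by
    have : margX1 p x = ∑ b, ∑ c, rdnXor (x, b, c) := by
      unfold margX1
      rw [Finset.sum_comm]
      refine Finset.sum_congr rfl fun b _ => ?_
      rw [Finset.sum_comm]
      exact Finset.sum_congr rfl fun c _ => hm _ _ _
    rw [this]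
    obtain ⟨r, a⟩ := x
    fin_cases r <;> fin_cases a <;>
      simp [rdnXor, Fintype.sum_prod_type, Fin.sum_univ_two] <;> norm_num
  have mX2 : ∀ x, margX2 p x = 1 / 4 := fun x => by
    have : margX2 p x = ∑ b, ∑ c, rdnXor (b, x, c) := by
      unfold margX2
      rw [Finset.sum_comm]
      refine Finset.sum_congr rfl fun b _ => ?_
      rw [Finset.sum_comm]
      exact Finset.sum_congr rfl fun c _ => hm _ _ _
    rw [this]
    obtain ⟨r, a⟩ := x
    fin_cases r <;> fin_cases a <;>
      simp [rdnXor, Fintype.sum_prod_type, Fin.sum_univ_two] <;> norm_num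
  have mY : ∀ x, margY p x = 1 / 4 := fun x => by
    have : margY p x = ∑ b, ∑ c, rdnXor (b, c, x) := by
      unfold margY
      rw [Finset.sum_comm]
      refine Finset.sum_congr rfl fun b _ => ?_
      rw [Finset.sum_comm]
      exact Finset.sum_congr rfl fun c _ => hm _ _ _
    rw [this]
    obtain ⟨r, a⟩ := x
    fin_cases r <;> fin_cases a <;>
      simp [rdnXor, Fintype.sum_prod_type, Fin.sum_univ_two] <;> norm_num
  have e1 := ent_zero (margQX1 p) (margX1 p)
    (fun q a => Finset.sum_nonneg fun _ _ => Finset.sum_nonneg fun _ _ => hp _)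
    (fun a => by rw [mX1]; norm_num) (fun a => rfl) hX1
  have e2 := ent_zero (margQX2 p) (margX2 p)
    (fun q a => Finset.sum_nonneg fun _ _ => Finset.sum_nonneg fun _ _ => hp _)
    (fun a => by rw [mX2]; norm_num) (fun a => rfl) hX2
  simp only [mX1] at e1
  simp only [mX2] at e2
  have yn : ∀ q y, 0 ≤ margQY p q y :=
    fun q y => Finset.sum_nonneg fun _ _ => Finset.sum_nonneg fun _ _ => hp _
  have sQ : ∀ q, margQ p q = ∑ y, margQY p q y := fun q => by
    unfold margQ margQY
    rw [Finset.sum_comm' (t' := Finset.univ) (s' := fun _ => Finset.univ) (by simp)]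
    rw [Finset.sum_congr rfl fun b _ => Finset.sum_comm]
    rw [Finset.sum_comm]
    exact Finset.sum_congr rfl fun b _ => Finset.sum_comm
  have key : ∀ q r, margQY p q (r, 0) = margQY p q (r, 1) := fun q r => by
    have a0 := e1 q (r, 0)
    have a1 := e1 q (r, 1)
    have b0 := e2 q (r, 0)
    have b1 := e2 q (r, 1)
    have n := fun a b => hp (q, (r, a), (r, b), (r, a + b))
    have l := fun a b => h8 q r a r b r (a + b)
    have n00 := n 0 0
    have n01 := n 0 1
    have n10 := n 1 0
    have n11 := n 1 1
    have l00 := l 0 0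
    have l01 := l 0 1
    have l10 := l 1 0
    have l11 := l 1 1
    have o : (1 + 1 : Fin 2) = 0 := rfl
    fin_cases r <;>
    · simp [margQX1, margQX2, margQY, Fintype.sum_prod_type, Fin.sum_univ_two, hz, o] at a0 a1 b0 b1 n00 n01 n10 n11 l00 l01 l10 l11 ⊢
      first
      | exact xor_arith n00 n01 n10 n11 l00 l01 l10 l11 a0 a1 b0 b1
      | linarith [xor_arith n00 n01 n10 n11 l00 l01 l10 l11 a0 a1 b0 b1]
  have half : ∀ q y, 2 * margQY p q y ≤ margQ p q := fun q y => by
    have k0 := key q 0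
    have k1 := key q 1
    have y00 := yn q (0, 0)
    have y10 := yn q (1, 0)
    have s := sQ q
    simp only [Fintype.sum_prod_type, Fin.sum_univ_two] at s
    obtain ⟨r, c⟩ := y
    fin_cases r <;> fin_cases c <;> simp <;> linarith
  have tot : ∑ q, ∑ c, margQY p q c = 1 := by
    rw [Finset.sum_comm]
    have : ∀ c, ∑ q, margQY p q c = 1 / 4 := mY
    simp [this]
  rw [← tot]
  unfold miQY
  refine Finset.sum_le_sum fun q _ => Finset.sum_le_sum fun c _ => ?_
  rcases (yn q c).eq_or_lt with h | h
  · rw [← h]; simp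
  · have hq := half q c
    have hq0 : 0 < margQ p q := by linarith
    have : logb 2 (margQY p q c / (margQ p q * margY p c)) ≤ 1 := by
      rw [mY, Real.logb_le_iff_le_rpow (by norm_num) (by positivity),
        div_le_iff₀ (by positivity)]
      norm_num
      linarith
    nlinarith

theorem rdnXor_partA :
    condEntQX1 rdnXorQ = 0 ∧ condEntQX2 rdnXorQ = 0 ∧ miQY rdnXorQ = 1 := by
  have o : (1 + 1 : Fin 2) = 0 := rfl
  refine ⟨?_, ?_, ?_⟩
  · simp [condEntQX1, margQX1, margX1, rdnXorQ, rdnXor, Fintype.sum_prod_type, Fin.sum_univ_two, o]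
  · simp [condEntQX2, margQX2, margX2, rdnXorQ, rdnXor, Fintype.sum_prod_type, Fin.sum_univ_two, o]
  · simp [miQY, margQY, margQ, margY, rdnXorQ, rdnXor, Fintype.sum_prod_type, Fin.sum_univ_two, o]
    norm_num

theorem stmt_13 :
    (condEntQX1 rdnXorQ = 0 ∧ condEntQX2 rdnXorQ = 0 ∧ miQY rdnXorQ = 1) ∧
    (∀ (Q' : Type) (_ : Fintype Q')
        (p : Q' × (Fin 2 × Fin 2) × (Fin 2 × Fin 2) × (Fin 2 × Fin 2) → ℝ),
      (∀ a, 0 ≤ p a) →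
      (∀ x₁ x₂ y, (∑ q, p (q, x₁, x₂, y)) = rdnXor (x₁, x₂, y)) →
      condEntQX1 p = 0 → condEntQX2 p = 0 → miQY p ≤ 1) := by
  exact ⟨rdnXor_partA, fun Q' _ p hp hm h1 h2 => rdnXor_partB Q' p hp hm h1 h2⟩
end
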